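/- Let q > 2 and let u : ℝ/ℤ → ℝⁿ be an embedded, regular C¹ curve with bil(u) < ∞ and [u']_{W^{1-1/q,q}} < ∞, and let v, w : ℝ/ℤ → ℝⁿ be C¹ with finite W^{1-1/q,q} seminorms of their derivatives. Then the functional M(u; v, w) = ∬_{(ℝ/ℤ)²} |u'(y)∧(u(x)−u(y))|^{q−2} / |u(x)−u(y)|^{2q} · ⟨u'(y)∧(u(x)−u(y)), v'(y)∧(w(x)−w(y)−(x−y)w'(y))⟩ dx dy satisfies |M(u; v, w)| ≤ (bil u)^{2q} · ‖u'‖_{L^∞}^{q−1} · [u']_{W^{1-1/q,q}}^{q−1} · ‖v'‖_{L^∞} · [w']_{W^{1-1/q,q}}, where (x−y) denotes the representative of x−y in (−1/2, 1/2]. -/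

import Mathlib

open MeasureTheory Set Filter
open scoped RealInnerProductSpace ENNReal Topology

noncomputable section

/-- The distance on the circle `ℝ/ℤ` between the points represented by `x` and `y`. -/
def circDist (x y : ℝ) : ℝ := ‖((x - y : ℝ) : AddCircle (1 : ℝ))‖

/-- The representative of `z` modulo `1` lying in `(-1/2, 1/2]`. -/
def wrap (z : ℝ) : ℝ := 1 / 2 - Int.fract (1 / 2 - z)

/-- Squared wedge norm `|a ∧ b|² = |a|²|b|² - ⟨a,b⟩²`. -/
def wedgeSq {n : ℕ} (a b : EuclideanSpace ℝ (Fin n)) : ℝ :=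
  ‖a‖ ^ 2 * ‖b‖ ^ 2 - ⟪a, b⟫ ^ 2

/-- Wedge inner product `⟨a∧b, c∧d⟩ = ⟨a,c⟩⟨b,d⟩ - ⟨a,d⟩⟨b,c⟩`. -/
def wedgeInner {n : ℕ} (a b c d : EuclideanSpace ℝ (Fin n)) : ℝ :=
  ⟪a, c⟫ * ⟪b, d⟫ - ⟪a, d⟫ * ⟪b, c⟫

/-- Fundamental domain for double integrals over `(ℝ/ℤ)²`. -/
def unitSq : Set (ℝ × ℝ) := Ioc (0 : ℝ) 1 ×ˢ Ioc (0 : ℝ) 1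

/-- The tangent-point functional `TP` (extended-real-valued). -/
def TPe {n : ℕ} (q : ℝ) (u : ℝ → EuclideanSpace ℝ (Fin n)) : ℝ≥0∞ :=
  ENNReal.ofReal (1 / q) *
    ∫⁻ p in unitSq, ENNReal.ofReal
      (wedgeSq (deriv u p.2) (u p.1 - u p.2) ^ (q / 2) / ‖u p.1 - u p.2‖ ^ (2 * q))

/-- The tangent-point functional `TP` (real-valued). -/
def TPr {n : ℕ} (q : ℝ) (u : ℝ → EuclideanSpace ℝ (Fin n)) : ℝ := (TPe q u).toReal

/-- The `q`-th power of the Sobolev–Slobodeckii seminorm `[f]_{W^{s,q}}` on `ℝ/ℤ`. -/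
def sobSemPow {n : ℕ} (s q : ℝ) (f : ℝ → EuclideanSpace ℝ (Fin n)) : ℝ≥0∞ :=
  ∫⁻ p in unitSq, ENNReal.ofReal (‖f p.1 - f p.2‖ ^ q / circDist p.1 p.2 ^ (1 + s * q))

/-- The `W^{s,q}`-norm `‖f‖_{L^q} + [f]_{W^{s,q}}`. -/
def Wnorm {n : ℕ} (s q : ℝ) (f : ℝ → EuclideanSpace ℝ (Fin n)) : ℝ :=
  (∫ x in Ioc (0 : ℝ) 1, ‖f x‖ ^ q) ^ (1 / q) + (sobSemPow s q f).toReal ^ (1 / q)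

/-- The bi-Lipschitz constant `bil(u) = sup_{x ≢ y} |x-y|_{ℝ/ℤ}/|u(x)-u(y)|`. -/
def bil {n : ℕ} (u : ℝ → EuclideanSpace ℝ (Fin n)) : ℝ≥0∞ :=
  ⨆ (x : ℝ) (y : ℝ) (_ : circDist x y ≠ 0),
    ENNReal.ofReal (circDist x y) / ENNReal.ofReal ‖u x - u y‖

/-- The `L^∞`-norm of the derivative of `u`. -/
def linfD {n : ℕ} (u : ℝ → EuclideanSpace ℝ (Fin n)) : ℝ≥0∞ :=
  ⨆ x : ℝ, (‖deriv u x‖₊ : ℝ≥0∞)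

/-- A periodic curve is embedded if it is injective on the circle `ℝ/ℤ`. -/
def Embedded {n : ℕ} (u : ℝ → EuclideanSpace ℝ (Fin n)) : Prop :=
  ∀ x y : ℝ, u x = u y → ((x : AddCircle (1 : ℝ)) = (y : AddCircle (1 : ℝ)))

/-- A curve is regular if `min_{ℝ/ℤ} |u'| > 0`. -/
def Regular {n : ℕ} (u : ℝ → EuclideanSpace ℝ (Fin n)) : Prop :=
  0 < ⨅ x : ℝ, ‖deriv u x‖

/-- Orthogonal projection of `b` onto the orthogonal complement of `ℝ a`. -/
def projPerp {n : ℕ} (a b : EuclideanSpace ℝ (Fin n)) : EuclideanSpace ℝ (Fin n) :=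
  b - (⟪b, a⟫ / ‖a‖ ^ 2) • a

/-- The classical tangent-point functional (extended-real-valued). -/
def TPcle {n : ℕ} (q : ℝ) (u : ℝ → EuclideanSpace ℝ (Fin n)) : ℝ≥0∞ :=
  ENNReal.ofReal (1 / q) *
    ∫⁻ p in unitSq, ENNReal.ofReal
      (‖projPerp (deriv u p.2) (u p.1 - u p.2)‖ ^ q / ‖u p.1 - u p.2‖ ^ (2 * q) *
        (‖deriv u p.1‖ * ‖deriv u p.2‖))

/-- The integrand of the functional `M(u; v, w)`. -/
def Mintegrand {n : ℕ} (q : ℝ) (u v w : ℝ → EuclideanSpace ℝ (Fin n)) (p : ℝ × ℝ) : ℝ :=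
  wedgeSq (deriv u p.2) (u p.1 - u p.2) ^ ((q - 2) / 2) / ‖u p.1 - u p.2‖ ^ (2 * q) *
    wedgeInner (deriv u p.2) (u p.1 - u p.2) (deriv v p.2)
      (w p.1 - w p.2 - wrap (p.1 - p.2) • deriv w p.2)

/-- The functional `M(u; v, w)` appearing in the first variation of `TP`. -/
def Mfun {n : ℕ} (q : ℝ) (u v w : ℝ → EuclideanSpace ℝ (Fin n)) : ℝ :=
  ∫ p in unitSq, Mintegrand q u v w p

/-- The integrand of the functional `A(u; v, w)`. -/
def Aintegrand {n : ℕ} (q : ℝ) (u v w : ℝ → EuclideanSpace ℝ (Fin n)) (p : ℝ × ℝ) : ℝ :=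
  wedgeSq (deriv u p.2) (u p.1 - u p.2) ^ (q / 2) / ‖u p.1 - u p.2‖ ^ (2 * q + 2) *
    ⟪v p.1 - v p.2, w p.1 - w p.2⟫

/-- The functional `A(u; v, w)` appearing in the first variation of `TP`. -/
def Afun {n : ℕ} (q : ℝ) (u v w : ℝ → EuclideanSpace ℝ (Fin n)) : ℝ :=
  ∫ p in unitSq, Aintegrand q u v w p

/-- The first variation `δTP(u)[w] = M(u;u,w) + M(u;w,u) - 2A(u;u,w)`. -/
def deltaTP {n : ℕ} (q : ℝ) (u w : ℝ → EuclideanSpace ℝ (Fin n)) : ℝ :=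
  Mfun q u u w + Mfun q u w u - 2 * Afun q u u w

/-- The `H²` inner product on periodic curves. -/
def H2inner (v w : ℝ → EuclideanSpace ℝ (Fin 3)) : ℝ :=
  ∫ x in Ioc (0 : ℝ) 1,
    (⟪v x, w x⟫ + ⟪deriv v x, deriv w x⟫ + ⟪deriv (deriv v) x, deriv (deriv w) x⟫)

/-- The total energy `E(u) = (κ/2)∫|u''|² + ρ TP(u)`. -/
def energyE (κ ρ q : ℝ) (u : ℝ → EuclideanSpace ℝ (Fin 3)) : ℝ :=
  κ / 2 * (∫ x in Ioc (0 : ℝ) 1, ‖deriv (deriv u) x‖ ^ 2) + ρ * TPr q u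


section Wedge

variable {n : ℕ} (a b c d : EuclideanSpace ℝ (Fin n))

lemma wedgeInner_eq_sum :
    wedgeInner a b c d =
      (∑ p : Fin n × Fin n,
        (a p.1 * b p.2 - a p.2 * b p.1) * (c p.1 * d p.2 - c p.2 * d p.1)) / 2 := by
  have h : ∀ x y : EuclideanSpace ℝ (Fin n), ⟪x, y⟫ = ∑ i, x i * y i := fun x y => by
    simp [PiLp.inner_apply, mul_comm]
  have hsum : ∀ F G : Fin n → ℝ,
      (∑ i, F i) * ∑ j, G j = ∑ p : Fin n × Fin n, F p.1 * G p.2 := fun F G => by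
    rw [Finset.sum_mul_sum, ← Finset.univ_product_univ, Finset.sum_product]
  have hsum' : ∀ F G : Fin n → ℝ,
      (∑ i, F i) * ∑ j, G j = ∑ p : Fin n × Fin n, F p.2 * G p.1 := fun F G => by
    rw [mul_comm, hsum]
    exact Finset.sum_congr rfl fun p _ => mul_comm _ _
  rw [eq_div_iff two_ne_zero, wedgeInner, mul_two]
  simp only [h]
  nth_rewrite 1 [hsum, hsum]
  rw [hsum', hsum', ← Finset.sum_sub_distrib, ← Finset.sum_sub_distrib, ← Finset.sum_add_distrib]
  exact Finset.sum_congr rfl fun p _ => by ring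

lemma wedgeInner_self : wedgeInner a b a b = wedgeSq a b := by
  simp only [wedgeInner, wedgeSq, real_inner_self_eq_norm_sq, real_inner_comm b a]
  ring

lemma wedgeSq_nonneg : 0 ≤ wedgeSq a b := by
  rw [← wedgeInner_self, wedgeInner_eq_sum]
  exact div_nonneg (Finset.sum_nonneg fun _ _ => mul_self_nonneg _) zero_le_two

/-- The Cauchy–Schwarz inequality for the wedge inner product. -/
lemma abs_wedgeInner_le :
    |wedgeInner a b c d| ≤ √(wedgeSq a b) * √(wedgeSq c d) := by
  rw [← Real.sqrt_mul (wedgeSq_nonneg a b)]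
  refine Real.abs_le_sqrt ?_
  have := Finset.sum_mul_sq_le_sq_mul_sq Finset.univ
    (fun p : Fin n × Fin n => a p.1 * b p.2 - a p.2 * b p.1)
    (fun p : Fin n × Fin n => c p.1 * d p.2 - c p.2 * d p.1)
  rw [← wedgeInner_self a b, ← wedgeInner_self c d]
  simp only [wedgeInner_eq_sum, ← pow_two]
  linarith

lemma sqrt_wedgeSq_le : √(wedgeSq a b) ≤ ‖a‖ * ‖b‖ := by
  refine Real.sqrt_le_iff.2 ⟨by positivity, ?_⟩
  rw [wedgeSq, mul_pow]
  linarith [sq_nonneg ⟪a, b⟫]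

lemma wedgeSq_sub_smul (t : ℝ) : wedgeSq a (b - t • a) = wedgeSq a b := by
  simp only [wedgeSq, norm_sub_sq_real, inner_sub_right, inner_smul_right, norm_smul,
    real_inner_self_eq_norm_sq, real_inner_comm b a, mul_pow, Real.norm_eq_abs, sq_abs]
  ring

end Wedge

lemma wrap_eq_add_int (z : ℝ) : wrap z = z + (⌊1 / 2 - z⌋ : ℝ) := by
  rw [wrap, Int.fract]
  ring

lemma abs_wrap_le (z : ℝ) : |wrap z| ≤ 1 / 2 := by
  have h0 := Int.fract_nonneg (1 / 2 - z)
  have h1 := Int.fract_lt_one (1 / 2 - z)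
  rw [wrap, abs_le]
  constructor <;> linarith

lemma wrap_of_mem {h : ℝ} (hh : h ∈ Ioc (-(1 / 2) : ℝ) (1 / 2)) : wrap h = h := by
  rw [wrap, Int.fract_eq_self.2 ⟨by linarith [hh.2], by linarith [hh.1]⟩]
  ring

lemma wrap_add_one (z : ℝ) : wrap (z + 1) = wrap z := by
  rw [wrap, wrap, ← Int.fract_sub_one (1 / 2 - z)]
  ring_nf

lemma measurable_wrap : Measurable wrap :=
  measurable_const.sub (measurable_fract.comp (measurable_const.sub measurable_id))

lemma circDist_eq_abs_wrap (x y : ℝ) : circDist x y = |wrap (x - y)| := by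
  have h : ((x - y : ℝ) : AddCircle (1 : ℝ)) = (wrap (x - y) : ℝ) := by
    rw [wrap_eq_add_int, AddCircle.coe_add, left_eq_add, AddCircle.coe_eq_zero_iff]
    exact ⟨⌊1 / 2 - (x - y)⌋, by simp⟩
  rw [circDist, h, AddCircle.norm_coe_eq_abs_iff 1 one_ne_zero]
  simpa using abs_wrap_le (x - y)

lemma Function.Periodic.eq_of_circDist_eq_zero {α : Type*} {f : ℝ → α}
    (hf : Function.Periodic f 1) {x y : ℝ} (h : circDist x y = 0) : f x = f y := by
  rw [circDist_eq_abs_wrap, abs_eq_zero, wrap_eq_add_int] at h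
  have hx : x = y + ((-⌊1 / 2 - (x - y)⌋ : ℤ) : ℝ) * 1 := by
    push_cast
    linarith
  rw [hx]
  exact hf.int_mul _ y

/-- The integral of a doubly periodic function over the fundamental square, written in the
coordinates `(x - y, y)`. -/
lemma setLIntegral_unitSq_eq {G : ℝ → ℝ → ℝ≥0∞} (hG : Measurable (Function.uncurry G))
    (hper : ∀ y, Function.Periodic (fun x => G x y) 1) :
    ∫⁻ p in unitSq, G p.1 p.2 =
      ∫⁻ y in Ioc (0 : ℝ) 1, ∫⁻ h in Ioc (-(1 / 2) : ℝ) (1 / 2), G (y + h) y := by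
  rw [unitSq, Measure.volume_eq_prod, setLIntegral_prod_symm (fun p => G p.1 p.2)
    hG.aemeasurable]
  refine lintegral_congr fun y => ?_
  have hGy : Measurable fun x => G x y := hG.comp measurable_prodMk_right
  have hfd := (isAddFundamentalDomain_Ioc one_pos (0 : ℝ)).setLIntegral_eq
    (isAddFundamentalDomain_Ioc one_pos (y - 1 / 2)) (fun x => G x y)
    (hper y).map_vadd_zmultiples
  rw [zero_add] at hfd
  rw [hfd, ← (measurePreserving_add_left volume y).setLIntegral_comp_preimage measurableSet_Ioc
    hGy]
  congr 2
  ext h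
  simp only [mem_preimage, mem_Ioc]
  constructor <;> rintro ⟨h1, h2⟩ <;> constructor <;> linarith

section Hardy

lemma rpow_lintegral_le_lintegral_rpow {α : Type*} [MeasurableSpace α] (μ : Measure α)
    [IsProbabilityMeasure μ] {f : α → ℝ≥0∞} (hf : Measurable f) {q : ℝ} (hq : 1 ≤ q) :
    (∫⁻ t, f t ∂μ) ^ q ≤ ∫⁻ t, f t ^ q ∂μ := by
  have h := eLpNorm'_le_eLpNorm'_of_exponent_le one_pos hq μ hf.aestronglyMeasurable
  simp only [eLpNorm', enorm_eq_self, ENNReal.rpow_one, div_one] at h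
  calc (∫⁻ t, f t ∂μ) ^ q ≤ ((∫⁻ t, f t ^ q ∂μ) ^ (1 / q)) ^ q := by gcongr
    _ = _ := by rw [← ENNReal.rpow_mul, one_div_mul_cancel (by positivity), ENNReal.rpow_one]

variable {E : Type*} [NormedAddCommGroup E]

lemma measurable_enorm_div_rpow {g : ℝ → E} (hg : Continuous g) (q : ℝ) :
    Measurable fun h : ℝ => (‖g h‖ₑ / ‖h‖ₑ) ^ q :=
  (hg.enorm.measurable.div continuous_enorm.measurable).pow_const q

lemma lintegral_dilation_le {g : ℝ → E} (hg : Continuous g) {q : ℝ} (hq : 1 ≤ q) {t : ℝ}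
    (ht : t ∈ Ioc (0 : ℝ) 1) :
    ∫⁻ h in Ioc (-(1 / 2) : ℝ) (1 / 2), (‖g (t * h)‖ₑ / ‖h‖ₑ) ^ q ≤
      ∫⁻ h in Ioc (-(1 / 2) : ℝ) (1 / 2), (‖g h‖ₑ / ‖h‖ₑ) ^ q := by
  obtain ⟨ht0, ht1⟩ := ht
  set Φ : ℝ → ℝ≥0∞ := (Ioc (-(1 / 2) : ℝ) (1 / 2)).indicator fun h => (‖g h‖ₑ / ‖h‖ₑ) ^ q
  have hΦ : Measurable Φ := (measurable_enorm_div_rpow hg q).indicator measurableSet_Ioc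
  have hte0 : ENNReal.ofReal t ≠ 0 := by simpa using ht0
  calc ∫⁻ h in Ioc (-(1 / 2) : ℝ) (1 / 2), (‖g (t * h)‖ₑ / ‖h‖ₑ) ^ q
      ≤ ∫⁻ h in Ioc (-(1 / 2) : ℝ) (1 / 2), ENNReal.ofReal t * Φ (t * h) := by
        refine setLIntegral_mono (by fun_prop) fun h hh => ?_
        have hth : t * h ∈ Ioc (-(1 / 2) : ℝ) (1 / 2) :=
          ⟨by nlinarith [hh.1], by nlinarith [hh.2]⟩
        have hte : ‖t * h‖ₑ = ENNReal.ofReal t * ‖h‖ₑ := by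
          rw [enorm_mul, Real.enorm_of_nonneg ht0.le]
        have hfac : ‖g (t * h)‖ₑ / ‖h‖ₑ = ENNReal.ofReal t * (‖g (t * h)‖ₑ / ‖t * h‖ₑ) := by
          rw [hte, ← mul_div_assoc, ENNReal.mul_div_mul_left _ _ hte0 ENNReal.ofReal_ne_top]
        rw [hfac, ENNReal.mul_rpow_of_nonneg _ _ (by linarith)]
        simp only [Φ, indicator_of_mem hth]
        gcongr
        exact ENNReal.rpow_le_self_of_le_one (by simpa using ht1) hq
    _ ≤ ∫⁻ h, ENNReal.ofReal t * Φ (t * h) := setLIntegral_le_lintegral _ _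
    _ = ∫⁻ h, Φ h := by
        rw [lintegral_const_mul _ (by fun_prop), ← lintegral_map hΦ (by fun_prop), ← smul_eq_mul,
          ← lintegral_smul_measure]
        congr 1
        simpa only [abs_of_pos ht0] using Real.smul_map_volume_mul_left ht0.ne'
    _ = _ := lintegral_indicator measurableSet_Ioc _

variable [NormedSpace ℝ E]

/-- A Hardy-type inequality for averages along rays. -/
lemma lintegral_average_le {g : ℝ → E} (hg : Continuous g) {q : ℝ} (hq : 1 ≤ q) :
    ∫⁻ h in Ioc (-(1 / 2) : ℝ) (1 / 2), (‖∫ t in (0 : ℝ)..1, g (t * h)‖ₑ / ‖h‖ₑ) ^ q ≤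
      ∫⁻ h in Ioc (-(1 / 2) : ℝ) (1 / 2), (‖g h‖ₑ / ‖h‖ₑ) ^ q := by
  have : IsProbabilityMeasure (volume.restrict (Ioc (0 : ℝ) 1)) := ⟨by simp⟩
  have hmeas : Measurable (Function.uncurry fun h t : ℝ => (‖g (t * h)‖ₑ / ‖h‖ₑ) ^ q) := by
    have : Continuous fun p : ℝ × ℝ => ‖g (p.2 * p.1)‖ₑ := by fun_prop
    exact (this.measurable.div (measurable_fst.enorm)).pow_const q
  calc ∫⁻ h in Ioc (-(1 / 2) : ℝ) (1 / 2), (‖∫ t in (0 : ℝ)..1, g (t * h)‖ₑ / ‖h‖ₑ) ^ q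
      ≤ ∫⁻ h in Ioc (-(1 / 2) : ℝ) (1 / 2), ∫⁻ t in Ioc (0 : ℝ) 1,
          (‖g (t * h)‖ₑ / ‖h‖ₑ) ^ q := by
        refine lintegral_mono fun h => ?_
        have hm : Measurable fun t : ℝ => ‖g (t * h)‖ₑ :=
          (by fun_prop : Continuous fun t : ℝ => ‖g (t * h)‖ₑ).measurable
        refine le_trans ?_ (rpow_lintegral_le_lintegral_rpow _ (hm.div_const _) hq)
        simp only [div_eq_mul_inv]
        rw [lintegral_mul_const _ hm, intervalIntegral.integral_of_le zero_le_one]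
        gcongr
        exact enorm_integral_le_lintegral_enorm _
    _ = ∫⁻ t in Ioc (0 : ℝ) 1, ∫⁻ h in Ioc (-(1 / 2) : ℝ) (1 / 2),
          (‖g (t * h)‖ₑ / ‖h‖ₑ) ^ q := lintegral_lintegral_swap hmeas.aemeasurable
    _ ≤ ∫⁻ t in Ioc (0 : ℝ) 1, ∫⁻ h in Ioc (-(1 / 2) : ℝ) (1 / 2), (‖g h‖ₑ / ‖h‖ₑ) ^ q :=
        setLIntegral_mono measurable_const fun t ht => lintegral_dilation_le hg hq ht
    _ = _ := by simp

lemma sub_sub_smul_deriv_eq_integral [CompleteSpace E] {f : ℝ → E} (hf : ContDiff ℝ 1 f)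
    (y h : ℝ) :
    f (y + h) - f y - h • deriv f y =
      h • ∫ t in (0 : ℝ)..1, (deriv f (y + t * h) - deriv f y) := by
  have hc : Continuous (deriv f) := hf.continuous_deriv le_rfl
  have hd : ∀ t ∈ uIcc (0 : ℝ) 1,
      HasDerivAt (fun t => f (y + t * h) - (t * h) • deriv f y)
        (h • (deriv f (y + t * h) - deriv f y)) t := fun t _ => by
    have h1 : HasDerivAt (fun t : ℝ => t * h) h t := by
      simpa using (hasDerivAt_id t).mul_const h
    have h2 := (hf.differentiable one_ne_zero (y + t * h)).hasDerivAt.scomp t (h1.const_add y)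
    simpa [smul_sub] using! h2.sub (h1.smul_const (deriv f y))
  rw [← intervalIntegral.integral_smul, intervalIntegral.integral_eq_sub_of_hasDerivAt hd
    (Continuous.intervalIntegrable (by fun_prop) _ _)]
  simp only [one_mul, zero_mul, add_zero, zero_smul, sub_zero]
  abel

end Hardy

section Remainder

variable {n : ℕ}

/-- The norm of the first order Taylor remainder of a periodic curve, divided by the square of the
distance on the circle. -/
def taylorQuot (f : ℝ → EuclideanSpace ℝ (Fin n)) (x y : ℝ) : ℝ :=
  ‖f x - f y - wrap (x - y) • deriv f y‖ / circDist x y ^ 2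

lemma taylorQuot_nonneg (f : ℝ → EuclideanSpace ℝ (Fin n)) (x y : ℝ) : 0 ≤ taylorQuot f x y := by
  unfold taylorQuot
  positivity

lemma measurable_circDist : Measurable fun p : ℝ × ℝ => circDist p.1 p.2 := by
  simp only [circDist_eq_abs_wrap]
  exact (measurable_wrap.comp (measurable_fst.sub measurable_snd)).abs

lemma measurable_remainder {f : ℝ → EuclideanSpace ℝ (Fin n)} (hf : ContDiff ℝ 1 f) :
    Measurable fun p : ℝ × ℝ => f p.1 - f p.2 - wrap (p.1 - p.2) • deriv f p.2 := by
  have hw := measurable_wrap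
  have h1 := hf.continuous.measurable
  have h2 := (hf.continuous_deriv le_rfl).measurable
  fun_prop

lemma measurable_taylorQuot {f : ℝ → EuclideanSpace ℝ (Fin n)} (hf : ContDiff ℝ 1 f) :
    Measurable fun p : ℝ × ℝ => taylorQuot f p.1 p.2 :=
  (measurable_remainder hf).norm.div (measurable_circDist.pow_const 2)

lemma circDist_add_one (x y : ℝ) : circDist (x + 1) y = circDist x y := by
  rw [circDist_eq_abs_wrap, circDist_eq_abs_wrap, add_sub_right_comm, wrap_add_one]

lemma Function.Periodic.deriv_of_real {f : ℝ → EuclideanSpace ℝ (Fin n)}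
    (hf : Function.Periodic f 1) : Function.Periodic (deriv f) 1 := fun x => by
  rw [← deriv_comp_add_const, funext hf]

/-- The Taylor quotient is controlled in `L^q` by the Sobolev–Slobodeckii seminorm of the
derivative. -/
lemma lintegral_taylorQuot_le {f : ℝ → EuclideanSpace ℝ (Fin n)} (hf : ContDiff ℝ 1 f)
    (hper : Function.Periodic f 1) {q : ℝ} (hq : 1 ≤ q) :
    ∫⁻ p in unitSq, ENNReal.ofReal (taylorQuot f p.1 p.2) ^ q ≤
      sobSemPow (1 - 1 / q) q (deriv f) := by
  have hc : Continuous (deriv f) := hf.continuous_deriv le_rfl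
  have hq0 : 0 < q := by linarith
  have hexp : 1 + (1 - 1 / q) * q = q := by field_simp; ring
  rw [sobSemPow, hexp,
    setLIntegral_unitSq_eq (G := fun x y => ENNReal.ofReal (taylorQuot f x y) ^ q)
      ((measurable_taylorQuot hf).ennreal_ofReal.pow_const q)
      (fun y x => by
        simp only [taylorQuot, circDist_add_one, hper x, add_sub_right_comm x 1 y, wrap_add_one]),
    setLIntegral_unitSq_eq
      (G := fun x y => ENNReal.ofReal (‖deriv f x - deriv f y‖ ^ q / circDist x y ^ q))
      (by
        have h1 : Continuous fun p : ℝ × ℝ => ‖deriv f p.1 - deriv f p.2‖ := by fun_prop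
        exact ((h1.measurable.pow_const q).div
          (measurable_circDist.pow_const q)).ennreal_ofReal)
      (fun y x => by simp only [circDist_add_one, hper.deriv_of_real x])]
  refine lintegral_mono fun y => ?_
  have hdist : ∀ h ∈ Ioc (-(1 / 2) : ℝ) (1 / 2), circDist (y + h) y = |h| := fun h hh => by
    rw [circDist_eq_abs_wrap, add_sub_cancel_left, wrap_of_mem hh]
  have hfactor : ∀ {a h : ℝ}, 0 ≤ a → h ≠ 0 →
      ENNReal.ofReal (a / |h|) = ENNReal.ofReal a / ‖h‖ₑ := fun {a h} ha hh => by
    rw [ENNReal.ofReal_div_of_pos (abs_pos.2 hh), ← Real.enorm_eq_ofReal_abs]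
  calc ∫⁻ h in Ioc (-(1 / 2) : ℝ) (1 / 2), ENNReal.ofReal (taylorQuot f (y + h) y) ^ q
      ≤ ∫⁻ h in Ioc (-(1 / 2) : ℝ) (1 / 2),
          (‖∫ t in (0 : ℝ)..1, (deriv f (y + t * h) - deriv f y)‖ₑ / ‖h‖ₑ) ^ q := by
        refine setLIntegral_mono' measurableSet_Ioc fun h hh => ?_
        gcongr
        rw [taylorQuot, hdist h hh, add_sub_cancel_left, wrap_of_mem hh,
          sub_sub_smul_deriv_eq_integral hf]
        rcases eq_or_ne h 0 with rfl | h0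
        · simp
        · rw [norm_smul, Real.norm_eq_abs, pow_two,
            mul_div_mul_left _ _ (abs_ne_zero.2 h0), hfactor (norm_nonneg _) h0, ofReal_norm]
    _ ≤ ∫⁻ h in Ioc (-(1 / 2) : ℝ) (1 / 2), (‖deriv f (y + h) - deriv f y‖ₑ / ‖h‖ₑ) ^ q :=
        lintegral_average_le (g := fun h => deriv f (y + h) - deriv f y) (by fun_prop) hq
    _ ≤ _ := by
        refine setLIntegral_mono' measurableSet_Ioc fun h hh => ?_
        rw [hdist h hh]
        rcases eq_or_ne h 0 with rfl | h0
        · simp [hq0]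
        · rw [← Real.div_rpow (norm_nonneg _) (abs_nonneg _),
            ← ENNReal.ofReal_rpow_of_nonneg (by positivity) hq0.le,
            hfactor (norm_nonneg _) h0, ofReal_norm]

end Remainder

section Bounds

variable {n : ℕ}

lemma linfD_ne_top {u : ℝ → EuclideanSpace ℝ (Fin n)} (hu : ContDiff ℝ 1 u)
    (hper : Function.Periodic u 1) : linfD u ≠ ⊤ := by
  obtain ⟨C, hC⟩ := (hper.deriv_of_real.isBounded_of_continuous one_ne_zero
    (hu.continuous_deriv le_rfl)).exists_norm_le
  refine ne_top_of_le_ne_top (ENNReal.ofReal_ne_top (r := C)) (iSup_le fun x => ?_)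
  rw [← enorm_eq_nnnorm, ← ofReal_norm]
  exact ENNReal.ofReal_le_ofReal (hC _ (mem_range_self x))

lemma norm_deriv_le_linfD {u : ℝ → EuclideanSpace ℝ (Fin n)} (hu : ContDiff ℝ 1 u)
    (hper : Function.Periodic u 1) (x : ℝ) : ‖deriv u x‖ ≤ (linfD u).toReal := by
  refine (ENNReal.ofReal_le_iff_le_toReal (linfD_ne_top hu hper)).1 ?_
  rw [ofReal_norm, enorm_eq_nnnorm]
  exact le_iSup (fun x => (‖deriv u x‖₊ : ℝ≥0∞)) x

lemma Embedded.norm_sub_pos {u : ℝ → EuclideanSpace ℝ (Fin n)} (hemb : Embedded u) {x y : ℝ}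
    (h : circDist x y ≠ 0) : 0 < ‖u x - u y‖ := by
  refine norm_pos_iff.2 fun h0 => h ?_
  rw [circDist, AddCircle.coe_sub, hemb x y (sub_eq_zero.1 h0), sub_self, norm_zero]

lemma circDist_le_bil_mul {u : ℝ → EuclideanSpace ℝ (Fin n)} (hemb : Embedded u)
    (hbil : bil u < ⊤) {x y : ℝ} (h : circDist x y ≠ 0) :
    circDist x y ≤ (bil u).toReal * ‖u x - u y‖ := by
  have hpos := hemb.norm_sub_pos h
  rw [← div_le_iff₀ hpos, ← ENNReal.ofReal_le_iff_le_toReal hbil.ne,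
    ENNReal.ofReal_div_of_pos hpos]
  exact le_iSup₂_of_le x y (le_iSup_of_le h le_rfl)

lemma abs_Mintegrand_le {q : ℝ} (hq : 2 < q) {u v w : ℝ → EuclideanSpace ℝ (Fin n)}
    (hu : ContDiff ℝ 1 u) (huper : Function.Periodic u 1) (hemb : Embedded u) (hbil : bil u < ⊤)
    (hv : ContDiff ℝ 1 v) (hvper : Function.Periodic v 1) (p : ℝ × ℝ) :
    |Mintegrand q u v w p| ≤
      (bil u).toReal ^ (2 * q) * (linfD u).toReal ^ (q - 1) * (linfD v).toReal *
        (taylorQuot u p.1 p.2 ^ (q - 1) * taylorQuot w p.1 p.2) := by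
  obtain ⟨x, y⟩ := p
  have hTu := taylorQuot_nonneg u x y
  have hTw := taylorQuot_nonneg w x y
  rcases eq_or_ne (circDist x y) 0 with h0 | h0
  · have hzero : Mintegrand q u v w (x, y) = 0 := by
      simp [Mintegrand, huper.eq_of_circDist_eq_zero h0, Real.zero_rpow (by linarith : 2 * q ≠ 0)]
    rw [hzero, abs_zero]
    positivity
  have hd := hemb.norm_sub_pos h0
  have hc : 0 < circDist x y := lt_of_le_of_ne (norm_nonneg _) h0.symm
  have hB := circDist_le_bil_mul hemb hbil h0
  set B := (bil u).toReal
  set L := (linfD u).toReal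
  set V := (linfD v).toReal
  set c := circDist x y
  set D := ‖u x - u y‖
  set Ru := u x - u y - wrap (x - y) • deriv u y
  set Rw := w x - w y - wrap (x - y) • deriv w y
  set s := √(wedgeSq (deriv u y) (u x - u y)) with hs
  have hs0 : 0 ≤ s := Real.sqrt_nonneg _
  have hs_le : s ≤ L * ‖Ru‖ := by
    rw [hs, ← wedgeSq_sub_smul _ _ (wrap (x - y))]
    exact (sqrt_wedgeSq_le _ _).trans
      (mul_le_mul_of_nonneg_right (norm_deriv_le_linfD hu huper y) (norm_nonneg _))
  have hinner : |wedgeInner (deriv u y) (u x - u y) (deriv v y) Rw| ≤ s * (V * ‖Rw‖) :=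
    (abs_wedgeInner_le _ _ _ _).trans <| mul_le_mul_of_nonneg_left
      ((sqrt_wedgeSq_le _ _).trans
        (mul_le_mul_of_nonneg_right (norm_deriv_le_linfD hv hvper y) (norm_nonneg _))) hs0
  have hpow : wedgeSq (deriv u y) (u x - u y) ^ ((q - 2) / 2) = s ^ (q - 2) := by
    rw [hs, Real.sqrt_eq_rpow, ← Real.rpow_mul (wedgeSq_nonneg _ _)]
    ring_nf
  have hspow : s ^ (q - 2) * s = s ^ (q - 1) := by
    rw [← Real.rpow_add_one' hs0 (by linarith)]
    ring_nf
  have hcpow : c ^ (2 * q) = (c ^ 2) ^ (q - 1) * c ^ 2 := by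
    rw [← Real.rpow_add_one' (by positivity) (by linarith), ← Real.rpow_natCast,
      ← Real.rpow_mul hc.le]
    norm_num
  have hDc : (D ^ (2 * q))⁻¹ ≤ B ^ (2 * q) / c ^ (2 * q) := by
    rw [inv_eq_one_div, div_le_div_iff₀ (by positivity) (by positivity), one_mul,
      ← Real.mul_rpow ENNReal.toReal_nonneg hd.le]
    gcongr
  have hL0 : 0 ≤ L := ENNReal.toReal_nonneg
  have hV0 : 0 ≤ V := ENNReal.toReal_nonneg
  calc |Mintegrand q u v w (x, y)|
      = s ^ (q - 2) * (D ^ (2 * q))⁻¹ *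
          |wedgeInner (deriv u y) (u x - u y) (deriv v y) Rw| := by
        rw [Mintegrand, abs_mul, hpow, div_eq_mul_inv, abs_of_nonneg (by positivity)]
    _ ≤ s ^ (q - 2) * (D ^ (2 * q))⁻¹ * (s * (V * ‖Rw‖)) := by gcongr
    _ = s ^ (q - 1) * (D ^ (2 * q))⁻¹ * (V * ‖Rw‖) := by
        rw [← hspow]
        ring
    _ ≤ (L * ‖Ru‖) ^ (q - 1) * (B ^ (2 * q) / c ^ (2 * q)) * (V * ‖Rw‖) := by
        gcongr
        linarith
    _ = B ^ (2 * q) * L ^ (q - 1) * V * ((‖Ru‖ / c ^ 2) ^ (q - 1) * (‖Rw‖ / c ^ 2)) := by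
        rw [Real.mul_rpow hL0 (norm_nonneg _), Real.div_rpow (norm_nonneg _) (by positivity),
          hcpow]
        field_simp

lemma measurable_Mintegrand (q : ℝ) {u v w : ℝ → EuclideanSpace ℝ (Fin n)}
    (hu : ContDiff ℝ 1 u) (hv : ContDiff ℝ 1 v) (hw : ContDiff ℝ 1 w) :
    Measurable (Mintegrand q u v w) := by
  have hu' := (hu.continuous_deriv le_rfl).measurable
  have hv' := (hv.continuous_deriv le_rfl).measurable
  have hu0 := hu.continuous.measurable
  have hr := measurable_remainder hw
  unfold Mintegrand wedgeSq wedgeInner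
  fun_prop

end Bounds

/-- estimate for the functional `M(u;v,w)` in the proof of
Proposition 3.9: `|M(u;v,w)| ≤ (bil u)^{2q} ‖u'‖_{L^∞}^{q-1} [u']_{W^{1-1/q,q}}^{q-1}
‖v'‖_{L^∞} [w']_{W^{1-1/q,q}}`; the integrand is integrable. -/
theorem Mfun_estimate (n : ℕ) (q : ℝ) (hq : 2 < q)
    (u v w : ℝ → EuclideanSpace ℝ (Fin n))
    (huC1 : ContDiff ℝ 1 u) (huper : Function.Periodic u 1)
    (hemb : Embedded u) (hreg : Regular u)
    (hbil : bil u < ⊤) (hsemu : sobSemPow (1 - 1 / q) q (deriv u) < ⊤)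
    (hvC1 : ContDiff ℝ 1 v) (hvper : Function.Periodic v 1)
    (hsemv : sobSemPow (1 - 1 / q) q (deriv v) < ⊤)
    (hwC1 : ContDiff ℝ 1 w) (hwper : Function.Periodic w 1)
    (hsemw : sobSemPow (1 - 1 / q) q (deriv w) < ⊤) :
    IntegrableOn (Mintegrand q u v w) unitSq ∧
      |Mfun q u v w| ≤
        (bil u).toReal ^ (2 * q) * (linfD u).toReal ^ (q - 1) *
          (sobSemPow (1 - 1 / q) q (deriv u)).toReal ^ ((q - 1) / q) *
          (linfD v).toReal *
          (sobSemPow (1 - 1 / q) q (deriv w)).toReal ^ (1 / q) := by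
  set K := (bil u).toReal ^ (2 * q) * (linfD u).toReal ^ (q - 1) * (linfD v).toReal with hK
  set Su := sobSemPow (1 - 1 / q) q (deriv u)
  set Sw := sobSemPow (1 - 1 / q) q (deriv w)
  have hK0 : 0 ≤ K := by positivity
  have hq1 : 0 < q - 1 := by linarith
  have hconj : (q / (q - 1)).HolderConjugate q :=
    (Real.HolderConjugate.conjExponent (by linarith)).symm
  have hmeas := measurable_Mintegrand q huC1 hvC1 hwC1
  have hTu := (measurable_taylorQuot huC1).ennreal_ofReal
  have hTw := (measurable_taylorQuot hwC1).ennreal_ofReal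
  have hbound : ∫⁻ p in unitSq, ‖Mintegrand q u v w p‖ₑ ≤
      ENNReal.ofReal K * (Su ^ ((q - 1) / q) * Sw ^ (1 / q)) := by
    calc ∫⁻ p in unitSq, ‖Mintegrand q u v w p‖ₑ
        ≤ ∫⁻ p in unitSq, ENNReal.ofReal K *
            (ENNReal.ofReal (taylorQuot u p.1 p.2) ^ (q - 1) *
              ENNReal.ofReal (taylorQuot w p.1 p.2)) := by
          refine lintegral_mono fun p => ?_
          have hTu0 := taylorQuot_nonneg u p.1 p.2
          rw [Real.enorm_eq_ofReal_abs, ENNReal.ofReal_rpow_of_nonneg hTu0 hq1.le,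
            ← ENNReal.ofReal_mul (by positivity), ← ENNReal.ofReal_mul hK0]
          exact ENNReal.ofReal_le_ofReal
            (abs_Mintegrand_le hq huC1 huper hemb hbil hvC1 hvper p)
      _ = ENNReal.ofReal K * ∫⁻ p in unitSq,
            (ENNReal.ofReal (taylorQuot u p.1 p.2) ^ (q - 1) *
              ENNReal.ofReal (taylorQuot w p.1 p.2)) :=
          lintegral_const_mul _ ((hTu.pow_const _).mul hTw)
      _ ≤ ENNReal.ofReal K * (Su ^ ((q - 1) / q) * Sw ^ (1 / q)) := by
          gcongr
          refine (ENNReal.lintegral_mul_le_Lp_mul_Lq _ hconj (hTu.pow_const _).aemeasurable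
            hTw.aemeasurable).trans ?_
          simp only [← ENNReal.rpow_mul, mul_div_cancel₀ q hq1.ne', one_div_div]
          gcongr
          · exact lintegral_taylorQuot_le huC1 huper (by linarith)
          · exact lintegral_taylorQuot_le hwC1 hwper (by linarith)
  have htop : ENNReal.ofReal K * (Su ^ ((q - 1) / q) * Sw ^ (1 / q)) ≠ ⊤ :=
    ENNReal.mul_ne_top ENNReal.ofReal_ne_top
      (ENNReal.mul_ne_top (ENNReal.rpow_ne_top_of_nonneg (by positivity) hsemu.ne)
        (ENNReal.rpow_ne_top_of_nonneg (by positivity) hsemw.ne))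
  refine ⟨⟨hmeas.aestronglyMeasurable, hbound.trans_lt htop.lt_top⟩, ?_⟩
  calc ‖Mfun q u v w‖ ≤ (∫⁻ p in unitSq, ‖Mintegrand q u v w p‖ₑ).toReal := by
        have := norm_integral_le_lintegral_norm (μ := volume.restrict unitSq) (Mintegrand q u v w)
        simpa only [ofReal_norm] using! this
    _ ≤ (ENNReal.ofReal K * (Su ^ ((q - 1) / q) * Sw ^ (1 / q))).toReal :=
        ENNReal.toReal_mono htop hbound
    _ = _ := by
        rw [ENNReal.toReal_mul, ENNReal.toReal_mul, ENNReal.toReal_ofReal hK0,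
          ← ENNReal.toReal_rpow, ← ENNReal.toReal_rpow, hK]
        ring
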